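/- Let H be a real Hilbert space, n ≥ 2, and let u : [0, T) → H^n be a solution of the ODE system du_i/dt = Σ_{j≠i} (u_j − u_i)/‖u_j − u_i‖ with initial value u(0) = x, whose coordinates are pairwise distinct at every time in [0, T). Then T ≤ δ(x)/2, where δ(x) = min_{i<j} ‖x_i − x_j‖. -/

import Mathlib

lemma mono_aux {H : Type*} [NormedAddCommGroup H] [InnerProductSpace ℝ H] (a b : H) :
    inner ℝ (b - a) ((‖a‖)⁻¹ • a - (‖b‖)⁻¹ • b) ≤ 0 := by
  by_cases ha : a = 0
  · subst ha
    simp only [sub_zero, smul_zero, zero_sub, inner_neg_right, inner_smul_right]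
    have := real_inner_self_nonneg (x := b)
    have : 0 ≤ ‖b‖⁻¹ * inner ℝ b b := by positivity
    linarith
  by_cases hb : b = 0
  · subst hb
    simp only [sub_zero, smul_zero, zero_sub, inner_neg_left, inner_smul_right]
    have := real_inner_self_nonneg (x := a)
    have : 0 ≤ ‖a‖⁻¹ * inner ℝ a a := by positivity
    linarith
  have ha' : 0 < ‖a‖ := norm_pos_iff.mpr ha
  have hb' : 0 < ‖b‖ := norm_pos_iff.mpr hb
  simp only [inner_sub_left, inner_sub_right, inner_smul_right, real_inner_self_eq_norm_sq,
    real_inner_comm a b]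
  have h := real_inner_le_norm a b
  rw [real_inner_comm] at h
  have h1 : ‖a‖⁻¹ * inner ℝ b a ≤ ‖b‖ := by
    rw [inv_mul_le_iff₀ ha']; exact h
  have h2 : ‖b‖⁻¹ * inner ℝ b a ≤ ‖a‖ := by
    rw [inv_mul_le_iff₀ hb']; linarith
  have h3 : ‖a‖⁻¹ * ‖a‖ ^ 2 = ‖a‖ := by field_simp
  have h4 : ‖b‖⁻¹ * ‖b‖ ^ 2 = ‖b‖ := by field_simp
  have h5 : (inner ℝ a b : ℝ) = inner ℝ b a := real_inner_comm _ _
  simp only [h5] at *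
  linarith

lemma field_aux {H : Type*} [NormedAddCommGroup H] [InnerProductSpace ℝ H] {n : ℕ}
    (v : Fin n → H) (i j : Fin n) (hij : i ≠ j) (hv : v i ≠ v j) :
    inner ℝ (v i - v j)
      ((∑ k ∈ Finset.univ.erase i, (‖v k - v i‖)⁻¹ • (v k - v i)) -
       (∑ k ∈ Finset.univ.erase j, (‖v k - v j‖)⁻¹ • (v k - v j))) ≤ -2 * ‖v i - v j‖ := by
  have hw : 0 < ‖v i - v j‖ := norm_pos_iff.mpr (sub_ne_zero.mpr hv)
  have e : ∀ i : Fin n, (∑ k ∈ Finset.univ.erase i, (‖v k - v i‖)⁻¹ • (v k - v i))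
      = ∑ k, (‖v k - v i‖)⁻¹ • (v k - v i) := fun i =>
    Finset.sum_erase _ (by simp)
  rw [e, e, ← Finset.sum_sub_distrib, inner_sum]
  have hself : ‖v i - v j‖⁻¹ * ‖v i - v j‖ ^ 2 = ‖v i - v j‖ := by field_simp
  calc _ ≤ ∑ k, ((if k = i then -‖v i - v j‖ else 0) + (if k = j then -‖v i - v j‖ else 0)) := by
        apply Finset.sum_le_sum
        intro k _
        by_cases hi : k = i
        · subst hi
          simp [hij, inner_smul_right, hself]
        by_cases hj : k = j
        · subst hj
          have h : (inner ℝ (v i - v k) (v k - v i) : ℝ) = -‖v i - v k‖ ^ 2 := by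
            rw [← neg_sub (v i) (v k), inner_neg_right, real_inner_self_eq_norm_sq]
          simp [hi, inner_smul_right, norm_sub_rev (v k) (v i), h, hself]
        have := mono_aux (v k - v i) (v k - v j)
        rw [sub_sub_sub_cancel_left] at this
        simpa [hi, hj] using this
    _ = _ := by
        rw [Finset.sum_add_distrib]; simp; ring

/-- **Inequality (6).** If `u : [0, T) → H^n` solves
`du_i/dt = ∑_{j ≠ i} (u_j − u_i)/‖u_j − u_i‖` with `u(0) = x` and pairwise distinct
coordinates at every time in `[0, T)`, then `T ≤ δ(x)/2`,
where `δ(x) = min_{i<j} ‖x_i − x_j‖`. -/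
theorem existence_time_le_half_min_gap
    {H : Type*} [NormedAddCommGroup H] [InnerProductSpace ℝ H] [CompleteSpace H]
    (n : ℕ) (hn : 2 ≤ n) (T : ℝ) (x : Fin n → H) (u : ℝ → Fin n → H)
    (hu0 : u 0 = x)
    (hdistinct : ∀ t ∈ Set.Ico (0 : ℝ) T, ∀ i j : Fin n, i ≠ j → u t i ≠ u t j)
    (hode : ∀ t ∈ Set.Ico (0 : ℝ) T, ∀ i : Fin n,
      HasDerivWithinAt (fun s => u s i)
        (∑ j ∈ Finset.univ.erase i, (‖u t j - u t i‖)⁻¹ • (u t j - u t i))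
        (Set.Ico (0 : ℝ) T) t) :
    T ≤ sInf {d : ℝ | ∃ i j : Fin n, i < j ∧ d = ‖x i - x j‖} / 2 := by
  have hne : {d : ℝ | ∃ i j : Fin n, i < j ∧ d = ‖x i - x j‖}.Nonempty :=
    ⟨_, ⟨0, by omega⟩, ⟨1, by omega⟩, by simp, rfl⟩
  rw [le_div_iff₀ (by norm_num)]
  apply le_csInf hne
  rintro d ⟨i, j, hij, rfl⟩
  by_contra! hlt
  have hn0 := norm_nonneg (x i - x j)
  have hT : 0 < T := by linarith
  have hd : ∀ t ∈ Set.Ico (0 : ℝ) T, HasDerivWithinAt (fun s => ‖u s i - u s j‖ + 2 * s)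
      (inner ℝ (u t i - u t j)
      ((∑ k ∈ Finset.univ.erase i, (‖u t k - u t i‖)⁻¹ • (u t k - u t i)) -
       (∑ k ∈ Finset.univ.erase j, (‖u t k - u t j‖)⁻¹ • (u t k - u t j))) / ‖u t i - u t j‖ + 2)
      (Set.Ico (0 : ℝ) T) t := by
    intro t ht
    have hw : 0 < ‖u t i - u t j‖ :=
      norm_pos_iff.mpr (sub_ne_zero.mpr (hdistinct t ht i j hij.ne))
    have h1 := (((hode t ht i).sub (hode t ht j)).norm_sq).sqrt (by
      simp only [Pi.sub_apply]; positivity)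
    simp only [Pi.sub_apply, Real.sqrt_sq (norm_nonneg _)] at h1
    have h2 := h1.add ((hasDerivWithinAt_id t (Set.Ico (0 : ℝ) T)).const_mul 2)
    rw [mul_div_mul_left _ _ (by norm_num : (2:ℝ) ≠ 0), mul_one] at h2
    exact h2
  have hanti : AntitoneOn (fun s => ‖u s i - u s j‖ + 2 * s) (Set.Ico (0 : ℝ) T) := by
    refine antitoneOn_of_hasDerivWithinAt_nonpos (convex_Ico 0 T)
      (fun t ht => (hd t ht).continuousWithinAt)
      (fun t ht => (hd t (interior_subset ht)).mono interior_subset) ?_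
    intro t ht
    have ht := interior_subset ht
    have hv := hdistinct t ht i j hij.ne
    have hw : 0 < ‖u t i - u t j‖ := norm_pos_iff.mpr (sub_ne_zero.mpr hv)
    have := (div_le_iff₀ hw).mpr (field_aux (u t) i j hij.ne hv)
    linarith
  have hmem : (‖x i - x j‖ / 2 + T) / 2 ∈ Set.Ico (0 : ℝ) T := ⟨by linarith, by linarith⟩
  have := hanti ⟨le_rfl, hT⟩ hmem hmem.1
  simp only [hu0] at this
  have := norm_nonneg (u ((‖x i - x j‖ / 2 + T) / 2) i - u ((‖x i - x j‖ / 2 + T) / 2) j)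
  linarith
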